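/- For every n ≥ 2 the freehedron F_n has exactly 3n − 1 faces of codimension 1: n faces corresponding to the operators d⁰₁, ..., d⁰_n, n − 1 faces corresponding to d¹₂, ..., d¹_n, and n faces corresponding to d²₁ = d¹₁, d²₂, ..., d²_n. In particular F₂ is a pentagon, and F₃ has eight 2-faces (four pentagons and four quadrilaterals), eighteen edges and twelve vertices. -/

import Mathlib

/-!
# Statement 18

For every `n ≥ 2` the freehedron `F_n` has exactly `3n − 1` faces of codimension `1`:
`n` faces `d⁰₁, …, d⁰ₙ`, `n − 1` faces `d¹₂, …, d¹ₙ`, and `n` faces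
`d²₁ = d¹₁, d²₂, …, d²ₙ`.  In particular `F₂` is a pentagon, and `F₃` has eight
`2`-faces (four pentagons and four quadrilaterals), eighteen edges and twelve vertices.

`F_n` is realized here by its inductive description as a subdivision of
`F_{n−1} × [0,1]` inside the cube `[0,1]^n`: the facets are the cubical faces `e⁰ᵢ`
(`d⁰ᵢ`, `1 ≤ i ≤ n`) and `e¹ᵢ` (`d¹ᵢ`, `2 ≤ i ≤ n`), the prisms `d²ᵢ × [0,1]`
(`1 ≤ i ≤ n − 2`) and the two halves `d²_{n−1} × [0,½]`, `d²_{n−1} × [½,1]` labelled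
`d²_{n−1}` and `d²ₙ`.  Vertices are points lying on enough facets, edges are infinite
pairwise intersections of facets, and a `2`-face of `F₃` is a pentagon (resp. a
quadrilateral) when it contains exactly `5` (resp. `4`) edges.
-/

open Set

/-- The product of a subset of `ℝ^n` with an interval, inside `ℝ^{n+1}`. -/
def prodSet {n : ℕ} (A : Set (Fin n → ℝ)) (J : Set ℝ) : Set (Fin (n + 1) → ℝ) :=
  {x | Fin.init x ∈ A ∧ x (Fin.last n) ∈ J}

/-- The cube `[0,1]^n`. -/
def cube (n : ℕ) : Set (Fin n → ℝ) := {x | ∀ i, 0 ≤ x i ∧ x i ≤ 1}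

/-- The facets `d⁰ᵢ(F_n)` (cubical faces `e⁰ᵢ`). -/
def d0face : (n : ℕ) → ℕ → Set (Fin n → ℝ)
  | 0, _ => ∅
  | 1, _ => {fun _ => 0}
  | (n + 2), i =>
      if i = n + 2 then prodSet (cube (n + 1)) {0}
      else prodSet (d0face (n + 1) i) (Set.Icc 0 1)

/-- The facets `d¹ᵢ(F_n)` (cubical faces `e¹ᵢ`), `i ≥ 2`; by convention `d¹₁ = d²₁`. -/
def d1face : (n : ℕ) → ℕ → Set (Fin n → ℝ)
  | 0, _ => ∅
  | 1, _ => {fun _ => 1}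
  | (n + 2), i =>
      if i = n + 2 then prodSet (cube (n + 1)) {1}
      else prodSet (d1face (n + 1) i) (Set.Icc 0 1)

/-- The facets `d²ᵢ(F_n)`: `d²ᵢ(F_{n−1}) × [0,1]` for `i ≤ n − 2` and the two halves
`d²_{n−1}(F_{n−1}) × [0,½]`, `d²_{n−1}(F_{n−1}) × [½,1]` for `i = n − 1, n`. -/
def d2face : (n : ℕ) → ℕ → Set (Fin n → ℝ)
  | 0, _ => ∅
  | 1, _ => {fun _ => 1}
  | (n + 2), i =>
      if i = n + 2 then prodSet (d2face (n + 1) (n + 1)) (Set.Icc (1 / 2) 1)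
      else if i = n + 1 then prodSet (d2face (n + 1) (n + 1)) (Set.Icc 0 (1 / 2))
      else prodSet (d2face (n + 1) i) (Set.Icc 0 1)

/-- The labels of the codimension-one faces of `F_n`: `d⁰ᵢ` for `1 ≤ i ≤ n`, `d¹ᵢ` for
`2 ≤ i ≤ n`, `d²ᵢ` for `1 ≤ i ≤ n` (the label `d¹₁` being identified with `d²₁`). -/
def FacetLabel (n : ℕ) : Type :=
  { j : Fin 3 × ℕ //
    (j.1 = 0 ∧ 1 ≤ j.2 ∧ j.2 ≤ n) ∨ (j.1 = 1 ∧ 2 ≤ j.2 ∧ j.2 ≤ n) ∨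
      (j.1 = 2 ∧ 1 ≤ j.2 ∧ j.2 ≤ n) }

/-- The facet of `F_n` carried by a label. -/
def facetOf (n : ℕ) (L : FacetLabel n) : Set (Fin n → ℝ) :=
  if L.1.1 = 0 then d0face n L.1.2
  else if L.1.1 = 1 then d1face n L.1.2
  else d2face n L.1.2

/-- The edges of the facet `L` of `F₃`. -/
def edgesOf (L : FacetLabel 3) : Set (Set (Fin 3 → ℝ)) :=
  {E | ∃ L' : FacetLabel 3, L' ≠ L ∧ E = facetOf 3 L ∩ facetOf 3 L' ∧ E.Infinite}

/-!
In units of `1 / 2`, every facet of `F_n` is an axis-parallel box with corners in `{0, 1, 2}^n`,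
and boxes intersect by taking the supremum of the lower and the infimum of the upper corners.
Hence a facet is determined by its corners, and the face numbers of `F₂` and `F₃` are counts of
pairs of corners in a finite lattice. The facets `d⁰ᵢ` and `d¹ᵢ` fill the sides `xᵢ = 0` and
`xᵢ = 1` of the cube; the remaining side `x₁ = 1` is subdivided by the `d²ᵢ`, as one sees by
induction on `n`, the halves of `d²_{n-1} × [0,1]` being glued back together.
-/

section Icc

variable {κ α β : Type*} [PartialOrder β]

theorem infinite_Icc_iff [DenselyOrdered β] {a b : β} : (Icc a b).Infinite ↔ a < b := by
  refine ⟨fun h => (nonempty_Icc.1 h.nonempty).lt_of_ne ?_, Icc_infinite⟩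
  rintro rfl
  exact h (Icc_self a ▸ finite_singleton a)

theorem ncard_mem_Icc_of_subsingleton [Preorder α] [DecidableEq α] [DecidableLE α]
    (f : α ↪o β) (S : Finset κ) (a b : κ → α) (h : ∀ s ∈ S, a s ≤ b s → a s = b s) :
    {v | ∃ s ∈ S, v ∈ Icc (f (a s)) (f (b s))}.ncard = ({s ∈ S | a s ≤ b s}.image a).card := by
  have hset : {v | ∃ s ∈ S, v ∈ Icc (f (a s)) (f (b s))} = f '' ({s ∈ S | a s ≤ b s}.image a) := by
    ext v
    simp only [mem_ofPred_eq, mem_image, Finset.coe_image, Finset.coe_filter]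
    constructor
    · rintro ⟨s, hs, hv⟩
      have hle : a s ≤ b s := f.le_iff_le.1 (hv.1.trans hv.2)
      rw [← h s hs hle, Icc_self] at hv
      exact ⟨_, ⟨s, ⟨hs, hle⟩, rfl⟩, hv.symm⟩
    · rintro ⟨_, ⟨s, ⟨hs, hle⟩, rfl⟩, rfl⟩
      exact ⟨s, hs, left_mem_Icc.2 (f.le_iff_le.2 hle)⟩
  rw [hset, ncard_image_of_injective _ f.injective, ncard_coe_finset]

theorem ncard_infinite_Icc [PartialOrder α] [DecidableEq α] [DecidableLT α] [DenselyOrdered β]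
    (f : α ↪o β) (S : Finset κ) (a b : κ → α) :
    {E | ∃ s ∈ S, E = Icc (f (a s)) (f (b s)) ∧ E.Infinite}.ncard =
      ({s ∈ S | a s < b s}.image fun s => (a s, b s)).card := by
  have hset : {E | ∃ s ∈ S, E = Icc (f (a s)) (f (b s)) ∧ E.Infinite} =
      (fun q : α × α => Icc (f q.1) (f q.2)) ''
        ({s ∈ S | a s < b s}.image fun s => (a s, b s)) := by
    ext E
    simp only [mem_ofPred_eq, mem_image, Finset.coe_image, Finset.coe_filter]
    constructor
    · rintro ⟨s, hs, rfl, hinf⟩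
      exact ⟨_, ⟨s, ⟨hs, f.lt_iff_lt.1 (infinite_Icc_iff.1 hinf)⟩, rfl⟩, rfl⟩
    · rintro ⟨_, ⟨s, ⟨hs, hlt⟩, rfl⟩, rfl⟩
      exact ⟨s, hs, rfl, infinite_Icc_iff.2 (f.lt_iff_lt.2 hlt)⟩
  rw [hset, InjOn.ncard_image, ncard_coe_finset]
  rintro ⟨a₁, b₁⟩ hq ⟨a₂, b₂⟩ - h
  obtain ⟨s, hs, heq⟩ := Finset.mem_image.1 hq
  obtain ⟨rfl, rfl⟩ := Prod.mk.inj heq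
  have hle := f.le_iff_le.2 (Finset.mem_filter.1 hs).2.le
  obtain ⟨ha, hb⟩ := (Icc_eq_Icc_iff hle).1 h
  exact Prod.ext (f.injective ha) (f.injective hb)

end Icc

section HalfPoint

variable {ι : Type*}

/-- The lattice point `a`, read in units of `1 / 2`: the point with coordinates `a j / 2`. The
cells of the subdivided cube have their vertices at such points. -/
noncomputable def halfPoint : (ι → ℕ) ↪o (ι → ℝ) :=
  OrderEmbedding.ofMapLEIff (fun a j => a j / 2) fun a b => by
    simp [Pi.le_def, div_le_div_iff_of_pos_right]

theorem halfPoint_apply (a : ι → ℕ) (j : ι) : halfPoint a j = a j / 2 := rfl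

theorem halfPoint_sup (a b : ι → ℕ) : halfPoint (a ⊔ b) = halfPoint a ⊔ halfPoint b := by
  ext j
  simp [halfPoint_apply, max_div_div_right]

theorem halfPoint_inf (a b : ι → ℕ) : halfPoint (a ⊓ b) = halfPoint a ⊓ halfPoint b := by
  ext j
  simp [halfPoint_apply, min_div_div_right]

theorem Icc_halfPoint_inter (a b c d : ι → ℕ) :
    Icc (halfPoint a) (halfPoint b) ∩ Icc (halfPoint c) (halfPoint d) =
      Icc (halfPoint (a ⊔ c)) (halfPoint (b ⊓ d)) := by
  rw [Icc_inter_Icc, halfPoint_sup, halfPoint_inf]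

theorem mem_Icc_halfPoint {a b : ι → ℕ} {x : ι → ℝ} :
    x ∈ Icc (halfPoint a) (halfPoint b) ↔ ∀ j, (a j : ℝ) / 2 ≤ x j ∧ x j ≤ b j / 2 := by
  simp only [mem_Icc, Pi.le_def, halfPoint_apply, forall_and]

end HalfPoint

theorem cube_eq_Icc (n : ℕ) : cube n = Icc 0 1 := by
  ext x
  simp [cube, Pi.le_def, forall_and]

theorem frontier_cube (n : ℕ) : frontier (cube n) = {x ∈ cube n | ∃ j, x j = 0 ∨ x j = 1} := by
  rw [cube_eq_Icc, isClosed_Icc.frontier_eq, ← pi_univ_Icc, interior_pi_set finite_univ]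
  ext x
  simp only [Pi.zero_apply, Pi.one_apply, interior_Icc, mem_sdiff, mem_univ_pi, mem_Icc, mem_Ioo,
    mem_ofPred_eq, not_forall]
  refine and_congr_right fun hx => exists_congr fun j => ?_
  grind

/-- The box in `ℝ^n` with corners `a / 2` and `b / 2`. The coordinates of the corners are listed by
sequences, so that the same `a` and `b` serve in every dimension. -/
def gridBox (n : ℕ) (a b : ℕ → ℕ) : Set (Fin n → ℝ) :=
  Icc (halfPoint fun j => a j) (halfPoint fun j => b j)

theorem mem_gridBox {n : ℕ} {a b : ℕ → ℕ} {x : Fin n → ℝ} :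
    x ∈ gridBox n a b ↔ ∀ j : Fin n, (a j : ℝ) / 2 ≤ x j ∧ x j ≤ b j / 2 :=
  mem_Icc_halfPoint

theorem gridBox_congr {n : ℕ} {a b a' b' : ℕ → ℕ} (ha : ∀ j < n, a j = a' j)
    (hb : ∀ j < n, b j = b' j) : gridBox n a b = gridBox n a' b' := by
  ext x
  simp only [mem_gridBox, ha _ (Fin.is_lt _), hb _ (Fin.is_lt _)]

theorem gridBox_succ (n : ℕ) (a b : ℕ → ℕ) :
    gridBox (n + 1) a b = prodSet (gridBox n a b) (Icc (a n / 2) (b n / 2)) := by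
  ext x
  simp [prodSet, mem_gridBox, Fin.forall_fin_succ', Fin.init]

theorem cube_eq_gridBox (n : ℕ) : cube n = gridBox n (fun _ => 0) (fun _ => 2) := by
  ext x
  simp [cube, mem_gridBox]

theorem singleton_const_eq_gridBox {a b : ℕ → ℕ} {c : ℝ} (ha : (a 0 : ℝ) / 2 = c)
    (hb : (b 0 : ℝ) / 2 = c) : {fun _ => c} = gridBox 1 a b := by
  ext x
  simp [mem_gridBox, funext_iff, ha, hb, ← ge_antisymm_iff]

/-- The `j`-th coordinate (from `0`), in units of `1 / 2`, of the lower corner of the facet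
`d^k_i` (with `i` counted from `1`). -/
def lowerCorner : Fin 3 → ℕ → ℕ → ℕ
  | 0, _, _ => 0
  | 1, i, j => if j + 1 = i then 2 else 0
  | 2, i, j => if j = 0 then 2 else if j < i then 1 else 0

/-- The `j`-th coordinate (from `0`), in units of `1 / 2`, of the upper corner of the facet
`d^k_i` (with `i` counted from `1`). -/
def upperCorner : Fin 3 → ℕ → ℕ → ℕ
  | 0, i, j => if j + 1 = i then 0 else 2
  | 1, _, _ => 2
  | 2, i, j => if j = i then 1 else 2

theorem lowerCorner_le_upperCorner (k : Fin 3) {i : ℕ} (hi : 1 ≤ i) (j : ℕ) :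
    lowerCorner k i j ≤ upperCorner k i j := by
  fin_cases k <;> grind [lowerCorner, upperCorner]

theorem upperCorner_eq_zero_iff {k : Fin 3} {i j : ℕ} :
    upperCorner k i j = 0 ↔ k = 0 ∧ j + 1 = i := by
  fin_cases k <;> grind [upperCorner]

theorem lowerCorner_zero_eq_two_iff {k : Fin 3} {i : ℕ} :
    lowerCorner k i 0 = 2 ↔ k = 2 ∨ k = 1 ∧ i = 1 := by
  fin_cases k <;> grind [lowerCorner]

theorem lowerCorner_one_eq_two_iff {i j : ℕ} : lowerCorner 1 i j = 2 ↔ j + 1 = i := by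
  grind [lowerCorner]

theorem upperCorner_two_eq_one_iff {i j : ℕ} : upperCorner 2 i j = 1 ↔ j = i := by
  grind [upperCorner]

theorem d0face_eq_gridBox :
    ∀ {n i : ℕ}, 1 ≤ i → i ≤ n → d0face n i = gridBox n (lowerCorner 0 i) (upperCorner 0 i)
  | 0, _, h₁, h₂ => by omega
  | 1, i, h₁, h₂ => by
    obtain rfl : i = 1 := by omega
    exact singleton_const_eq_gridBox (by simp [lowerCorner]) (by simp [upperCorner])
  | n + 2, i, h₁, h₂ => by
    rw [d0face, gridBox_succ]
    split_ifs with h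
    · rw [cube_eq_gridBox]
      congr 1
      · exact gridBox_congr (by grind [lowerCorner]) (by grind [upperCorner])
      · simp [lowerCorner, upperCorner, h]
    · rw [d0face_eq_gridBox h₁ (by omega)]
      simp [lowerCorner, upperCorner, Ne.symm h]

theorem d1face_eq_gridBox :
    ∀ {n i : ℕ}, 1 ≤ i → i ≤ n → d1face n i = gridBox n (lowerCorner 1 i) (upperCorner 1 i)
  | 0, _, h₁, h₂ => by omega
  | 1, i, h₁, h₂ => by
    obtain rfl : i = 1 := by omega
    exact singleton_const_eq_gridBox (by simp [lowerCorner]) (by simp [upperCorner])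
  | n + 2, i, h₁, h₂ => by
    rw [d1face, gridBox_succ]
    split_ifs with h
    · rw [cube_eq_gridBox]
      congr 1
      · exact gridBox_congr (by grind [lowerCorner]) (by grind [upperCorner])
      · simp [lowerCorner, upperCorner, h]
    · rw [d1face_eq_gridBox h₁ (by omega)]
      simp [lowerCorner, upperCorner, Ne.symm h]

theorem d2face_eq_gridBox :
    ∀ {n i : ℕ}, 1 ≤ i → i ≤ n → d2face n i = gridBox n (lowerCorner 2 i) (upperCorner 2 i)
  | 0, _, h₁, h₂ => by omega
  | 1, i, h₁, h₂ => by
    obtain rfl : i = 1 := by omega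
    exact singleton_const_eq_gridBox (by simp [lowerCorner]) (by simp [upperCorner])
  | n + 2, i, h₁, h₂ => by
    rw [d2face, gridBox_succ]
    split_ifs with h h'
    · rw [d2face_eq_gridBox (by omega) le_rfl]
      congr 1
      · exact gridBox_congr (by grind [lowerCorner]) (by grind [upperCorner])
      · simp [lowerCorner, upperCorner, h]
    · rw [d2face_eq_gridBox (by omega) le_rfl]
      simp [lowerCorner, upperCorner, h']
    · rw [d2face_eq_gridBox h₁ (by omega)]
      simp [lowerCorner, upperCorner, Ne.symm h', show ¬ n + 1 < i by omega]

theorem mem_d0face_succ {n : ℕ} {x : Fin n → ℝ} (i : Fin n) :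
    x ∈ d0face n (i + 1) ↔ x ∈ cube n ∧ x i = 0 := by
  have hcoord (j : Fin n) : ((lowerCorner 0 (i + 1) j : ℝ) / 2 ≤ x j ∧
      x j ≤ upperCorner 0 (i + 1) j / 2) ↔ (0 ≤ x j ∧ x j ≤ 1) ∧ (j = i → x j = 0) := by
    by_cases hj : j = i
    · simp only [lowerCorner, upperCorner, hj]
      grind
    · simp [lowerCorner, upperCorner, Fin.val_inj, hj]
  rw [d0face_eq_gridBox (by omega) (by omega), mem_gridBox]
  simp [hcoord, cube, forall_and]

theorem mem_d1face_succ {n : ℕ} {x : Fin n → ℝ} (i : Fin n) :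
    x ∈ d1face n (i + 1) ↔ x ∈ cube n ∧ x i = 1 := by
  have hcoord (j : Fin n) : ((lowerCorner 1 (i + 1) j : ℝ) / 2 ≤ x j ∧
      x j ≤ upperCorner 1 (i + 1) j / 2) ↔ (0 ≤ x j ∧ x j ≤ 1) ∧ (j = i → x j = 1) := by
    by_cases hj : j = i
    · simp only [lowerCorner, upperCorner, hj]
      grind
    · simp [lowerCorner, upperCorner, Fin.val_inj, hj]
  rw [d1face_eq_gridBox (by omega) (by omega), mem_gridBox]
  simp [hcoord, cube, forall_and]

theorem exists_mem_d2face_add_two {n : ℕ} {x : Fin (n + 2) → ℝ} :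
    (∃ i ∈ Icc 1 (n + 2), x ∈ d2face (n + 2) i) ↔
      (∃ i ∈ Icc 1 (n + 1), Fin.init x ∈ d2face (n + 1) i) ∧ x (Fin.last _) ∈ Icc 0 1 := by
  simp only [d2face, mem_Icc]
  constructor
  · rintro ⟨i, hi, hx⟩
    split_ifs at hx with h h'
    · exact ⟨⟨n + 1, by omega, hx.1⟩, by linarith [hx.2.1], hx.2.2⟩
    · exact ⟨⟨n + 1, by omega, hx.1⟩, hx.2.1, by linarith [hx.2.2]⟩
    · exact ⟨⟨i, by omega, hx.1⟩, hx.2⟩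
  · rintro ⟨⟨i, hi, hinit⟩, hlast⟩
    obtain hi' | rfl : i < n + 1 ∨ i = n + 1 := by omega
    · refine ⟨i, by omega, ?_⟩
      rw [if_neg (by omega), if_neg (by omega)]
      exact ⟨hinit, hlast⟩
    · obtain h | h := le_total (x (Fin.last _)) (1 / 2)
      · refine ⟨n + 1, by omega, ?_⟩
        rw [if_neg (by omega), if_pos rfl]
        exact ⟨hinit, hlast.1, h⟩
      · refine ⟨n + 2, by omega, ?_⟩
        rw [if_pos rfl]
        exact ⟨hinit, h, hlast.2⟩

theorem exists_mem_d2face : ∀ {n : ℕ} {x : Fin n → ℝ},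
    (∃ i ∈ Icc 1 n, x ∈ d2face n i) ↔ x ∈ cube n ∧ ∃ j : Fin n, j.val = 0 ∧ x j = 1
  | 0, x => by simp
  | 1, x => by
    simp only [d2face, cube, funext_iff, Icc_self, mem_singleton_iff, exists_eq_left,
      mem_ofPred_eq, Fin.forall_fin_one, Fin.exists_fin_one, Fin.val_eq_zero, true_and]
    grind
  | n + 2, x => by
    rw [exists_mem_d2face_add_two, exists_mem_d2face]
    simp only [cube, Fin.forall_fin_succ' (n := n + 1), Fin.exists_fin_succ' (n := n + 1),
      Fin.init, mem_ofPred_eq, mem_Icc, Fin.val_castSucc, Fin.val_last]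
    grind

theorem exists_mem_d0face {n : ℕ} {x : Fin n → ℝ} :
    (∃ i ∈ Icc 1 n, x ∈ d0face n i) ↔ x ∈ cube n ∧ ∃ j, x j = 0 := by
  constructor
  · rintro ⟨i, ⟨h₁, h₂⟩, hx⟩
    obtain ⟨j, rfl⟩ : ∃ j : Fin n, i = j + 1 := ⟨⟨i - 1, by omega⟩, by grind⟩
    exact ((mem_d0face_succ j).1 hx).imp_right fun hj => ⟨j, hj⟩
  · rintro ⟨hx, j, hj⟩
    exact ⟨j + 1, ⟨by omega, by omega⟩, (mem_d0face_succ j).2 ⟨hx, hj⟩⟩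

theorem exists_mem_d1face {n : ℕ} {x : Fin n → ℝ} :
    (∃ i ∈ Icc 2 n, x ∈ d1face n i) ↔ x ∈ cube n ∧ ∃ j : Fin n, j.val ≠ 0 ∧ x j = 1 := by
  constructor
  · rintro ⟨i, ⟨h₁, h₂⟩, hx⟩
    obtain ⟨j, rfl⟩ : ∃ j : Fin n, i = j + 1 := ⟨⟨i - 1, by omega⟩, by grind⟩
    exact ((mem_d1face_succ j).1 hx).imp_right fun hj => ⟨j, by omega, hj⟩
  · rintro ⟨hx, j, hj₀, hj⟩
    exact ⟨j + 1, ⟨by omega, by omega⟩, (mem_d1face_succ j).2 ⟨hx, hj⟩⟩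

namespace FacetLabel

variable {n : ℕ}

@[elab_as_elim]
theorem cases {motive : FacetLabel n → Prop}
    (d0 : ∀ i (hi : 1 ≤ i ∧ i ≤ n), motive ⟨(0, i), .inl ⟨rfl, hi⟩⟩)
    (d1 : ∀ i (hi : 2 ≤ i ∧ i ≤ n), motive ⟨(1, i), .inr (.inl ⟨rfl, hi⟩)⟩)
    (d2 : ∀ i (hi : 1 ≤ i ∧ i ≤ n), motive ⟨(2, i), .inr (.inr ⟨rfl, hi⟩)⟩)
    (L : FacetLabel n) : motive L := by
  obtain ⟨⟨k, i⟩, h⟩ := L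
  obtain ⟨hk, hi⟩ | ⟨hk, hi⟩ | ⟨hk, hi⟩ := id h <;> dsimp only at hk <;> subst hk
  exacts [d0 i hi, d1 i hi, d2 i hi]

theorem exists_mem_facetOf {x : Fin n → ℝ} :
    (∃ L, x ∈ facetOf n L) ↔ (∃ i ∈ Icc 1 n, x ∈ d0face n i) ∨
      (∃ i ∈ Icc 2 n, x ∈ d1face n i) ∨ ∃ i ∈ Icc 1 n, x ∈ d2face n i := by
  constructor
  · rintro ⟨L, hx⟩
    cases L using FacetLabel.cases with
    | d0 i hi => exact .inl ⟨i, hi, hx⟩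
    | d1 i hi => exact .inr (.inl ⟨i, hi, hx⟩)
    | d2 i hi => exact .inr (.inr ⟨i, hi, hx⟩)
  · rintro (⟨i, hi, hx⟩ | ⟨i, hi, hx⟩ | ⟨i, hi, hx⟩)
    exacts [⟨⟨(0, i), .inl ⟨rfl, hi⟩⟩, hx⟩, ⟨⟨(1, i), .inr (.inl ⟨rfl, hi⟩)⟩, hx⟩,
      ⟨⟨(2, i), .inr (.inr ⟨rfl, hi⟩)⟩, hx⟩]

/-- The lower corner of the facet with label `L`, in units of `1 / 2`. -/
def lower (L : FacetLabel n) : Fin n → ℕ := fun j => lowerCorner L.1.1 L.1.2 j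

/-- The upper corner of the facet with label `L`, in units of `1 / 2`. -/
def upper (L : FacetLabel n) : Fin n → ℕ := fun j => upperCorner L.1.1 L.1.2 j

theorem index_mem_Icc (L : FacetLabel n) : L.1.2 ∈ Icc 1 n := by
  have := L.2
  grind

theorem lower_le_upper (L : FacetLabel n) : L.lower ≤ L.upper :=
  fun j => lowerCorner_le_upperCorner L.1.1 L.index_mem_Icc.1 j

theorem facetOf_eq_Icc (L : FacetLabel n) :
    facetOf n L = Icc (halfPoint L.lower) (halfPoint L.upper) := by
  cases L using FacetLabel.cases with
  | d0 i hi => exact d0face_eq_gridBox hi.1 hi.2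
  | d1 i hi => exact d1face_eq_gridBox (one_le_two.trans hi.1) hi.2
  | d2 i hi => exact d2face_eq_gridBox hi.1 hi.2

theorem facetOf_nonempty (L : FacetLabel n) : (facetOf n L).Nonempty := by
  rw [facetOf_eq_Icc, nonempty_Icc, halfPoint.le_iff_le]
  exact L.lower_le_upper

theorem kind_eq_zero_iff (L : FacetLabel n) : L.1.1 = 0 ↔ ∃ j, L.upper j = 0 := by
  have := L.index_mem_Icc
  simp only [upper, upperCorner_eq_zero_iff, exists_and_left, iff_self_and]
  exact fun _ => ⟨⟨L.1.2 - 1, by grind⟩, by grind⟩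

theorem kind_eq_two_iff (L : FacetLabel n) :
    L.1.1 = 2 ↔ ∃ j : Fin n, j.val = 0 ∧ L.lower j = 2 := by
  have hi := L.index_mem_Icc
  constructor
  · intro hk
    exact ⟨⟨0, by grind⟩, rfl, lowerCorner_zero_eq_two_iff.2 (.inl hk)⟩
  · rintro ⟨j, hj₀, hj⟩
    rw [lower, hj₀, lowerCorner_zero_eq_two_iff] at hj
    have := L.2
    grind

theorem kind_eq_of_corners_eq {L L' : FacetLabel n} (hl : L.lower = L'.lower)
    (hu : L.upper = L'.upper) : L.1.1 = L'.1.1 := by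
  have h₀ := L.kind_eq_zero_iff
  have h₂ := L.kind_eq_two_iff
  rw [hu, ← kind_eq_zero_iff] at h₀
  rw [hl, ← kind_eq_two_iff] at h₂
  omega

theorem ext_corners {L L' : FacetLabel n} (hl : L.lower = L'.lower) (hu : L.upper = L'.upper) :
    L = L' := by
  have hk := kind_eq_of_corners_eq hl hu
  obtain ⟨⟨k, i'⟩, h'⟩ := L'
  refine Subtype.ext (Prod.ext hk ?_)
  cases L using FacetLabel.cases with
  | d0 i hi =>
    obtain rfl : 0 = k := hk
    have := congrFun hu ⟨i - 1, by omega⟩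
    grind [upper, upperCorner_eq_zero_iff]
  | d1 i hi =>
    obtain rfl : 1 = k := hk
    have := congrFun hl ⟨i - 1, by omega⟩
    grind [lower, lowerCorner_one_eq_two_iff]
  | d2 i hi =>
    obtain rfl : 2 = k := hk
    by_contra hne
    obtain hlt | hlt := lt_or_gt_of_ne hne
    · have := congrFun hu ⟨i, by grind⟩
      grind [upper, upperCorner_two_eq_one_iff]
    · have := congrFun hu ⟨i', by grind⟩
      grind [upper, upperCorner_two_eq_one_iff]

theorem facetOf_injective (n : ℕ) : Function.Injective (facetOf n) := by
  intro L L' h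
  rw [facetOf_eq_Icc, facetOf_eq_Icc, Icc_eq_Icc_iff (halfPoint.monotone L.lower_le_upper),
    halfPoint.eq_iff_eq, halfPoint.eq_iff_eq] at h
  exact ext_corners h.1 h.2

/-- The finite set underlying the type of labels. -/
def finset (n : ℕ) : Finset (Fin 3 × ℕ) :=
  {0} ×ˢ Finset.Icc 1 n ∪ ({1} ×ˢ Finset.Icc 2 n ∪ {2} ×ˢ Finset.Icc 1 n)

instance : Fintype (FacetLabel n) :=
  Fintype.subtype (finset n) fun _ => by
    simp only [finset, Finset.mem_union, Finset.mem_product, Finset.mem_singleton, Finset.mem_Icc]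

instance : DecidableEq (FacetLabel n) :=
  inferInstanceAs (DecidableEq { _j : Fin 3 × ℕ // _ })

theorem natCard (n : ℕ) : Nat.card (FacetLabel n) = 3 * n - 1 := by
  rw [Nat.card_eq_fintype_card]
  refine (Fintype.subtype_card _ _).trans ?_
  rw [finset, Finset.card_union_of_disjoint, Finset.card_union_of_disjoint]
  · simp only [Finset.singleton_product, Finset.card_map, Nat.card_Icc]
    omega
  · exact Finset.disjoint_product.2 (.inl (by simp))
  · refine Finset.disjoint_union_right.2 ⟨?_, ?_⟩ <;>
    exact Finset.disjoint_product.2 (.inl (by simp))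

end FacetLabel

theorem iUnion_facetOf (n : ℕ) : (⋃ L : FacetLabel n, facetOf n L) = frontier (cube n) := by
  ext x
  rw [mem_iUnion, FacetLabel.exists_mem_facetOf, exists_mem_d0face, exists_mem_d1face,
    exists_mem_d2face, frontier_cube]
  grind


instance {ι α : Type*} [Fintype ι] [LE α] [DecidableLE α] : DecidableLE (ι → α) := fun a b =>
  inferInstanceAs (Decidable (∀ j, a j ≤ b j))

instance {ι α : Type*} [Fintype ι] [Preorder α] [DecidableLE α] : DecidableLT (ι → α) :=
  decidableLTOfDecidableLE

namespace FacetLabel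

variable {n : ℕ}

theorem facetOf_inter (L L' : FacetLabel n) : facetOf n L ∩ facetOf n L' =
    Icc (halfPoint (L.lower ⊔ L'.lower)) (halfPoint (L.upper ⊓ L'.upper)) := by
  rw [facetOf_eq_Icc, facetOf_eq_Icc, Icc_halfPoint_inter]

theorem facetOf_inter_inter (L L' L'' : FacetLabel n) :
    facetOf n L ∩ facetOf n L' ∩ facetOf n L'' =
      Icc (halfPoint (L.lower ⊔ L'.lower ⊔ L''.lower))
        (halfPoint (L.upper ⊓ L'.upper ⊓ L''.upper)) := by
  rw [facetOf_inter, facetOf_eq_Icc, Icc_halfPoint_inter]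

end FacetLabel

theorem corners_inter_eq_of_ne : ∀ L L' : FacetLabel 2, L ≠ L' →
    L.lower ⊔ L'.lower ≤ L.upper ⊓ L'.upper → L.lower ⊔ L'.lower = L.upper ⊓ L'.upper := by
  decide +kernel

theorem corners_inter_inter_eq_of_ne : ∀ L L' L'' : FacetLabel 3, L ≠ L' ∧ L ≠ L'' ∧ L' ≠ L'' →
    L.lower ⊔ L'.lower ⊔ L''.lower ≤ L.upper ⊓ L'.upper ⊓ L''.upper →
    L.lower ⊔ L'.lower ⊔ L''.lower = L.upper ⊓ L'.upper ⊓ L''.upper := by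
  decide +kernel

theorem ncard_vertices_two :
    {v : Fin 2 → ℝ | ∃ L L' : FacetLabel 2, L ≠ L' ∧ v ∈ facetOf 2 L ∩ facetOf 2 L'}.ncard = 5 := by
  have h := ncard_mem_Icc_of_subsingleton halfPoint
    {p : FacetLabel 2 × FacetLabel 2 | p.1 ≠ p.2} (fun p => p.1.lower ⊔ p.2.lower)
    (fun p => p.1.upper ⊓ p.2.upper) fun p hp =>
      corners_inter_eq_of_ne p.1 p.2 (Finset.mem_filter_univ p |>.1 hp)
  simp only [Finset.mem_filter_univ, Prod.exists] at h
  simp only [FacetLabel.facetOf_inter, h]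
  decide +kernel

theorem ncard_vertices_three :
    {v : Fin 3 → ℝ | ∃ L L' L'' : FacetLabel 3, L ≠ L' ∧ L ≠ L'' ∧ L' ≠ L'' ∧
      v ∈ facetOf 3 L ∩ facetOf 3 L' ∩ facetOf 3 L''}.ncard = 12 := by
  have h := ncard_mem_Icc_of_subsingleton halfPoint
    {p : FacetLabel 3 × FacetLabel 3 × FacetLabel 3 | p.1 ≠ p.2.1 ∧ p.1 ≠ p.2.2 ∧ p.2.1 ≠ p.2.2}
    (fun p => p.1.lower ⊔ p.2.1.lower ⊔ p.2.2.lower)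
    (fun p => p.1.upper ⊓ p.2.1.upper ⊓ p.2.2.upper) fun p hp =>
      corners_inter_inter_eq_of_ne p.1 p.2.1 p.2.2 (Finset.mem_filter_univ p |>.1 hp)
  simp only [Finset.mem_filter_univ, Prod.exists, and_assoc] at h
  simp only [FacetLabel.facetOf_inter_inter, h]
  decide +kernel

theorem ncard_edges_three :
    {E : Set (Fin 3 → ℝ) | ∃ L L' : FacetLabel 3,
      L ≠ L' ∧ E = facetOf 3 L ∩ facetOf 3 L' ∧ E.Infinite}.ncard = 18 := by
  have h := ncard_infinite_Icc (β := Fin 3 → ℝ) halfPoint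
    {p : FacetLabel 3 × FacetLabel 3 | p.1 ≠ p.2}
    (fun p => p.1.lower ⊔ p.2.lower) (fun p => p.1.upper ⊓ p.2.upper)
  simp only [Finset.mem_filter_univ, Prod.exists] at h
  simp only [FacetLabel.facetOf_inter, h]
  decide +kernel

/-- The labels of the pentagonal facets `d⁰₃`, `d¹₂`, `d¹₃`, `d²₁` of `F₃`. -/
def pentagons : Finset (Fin 3 × ℕ) := {(0, 3), (1, 2), (1, 3), (2, 1)}

theorem ncard_edgesOf (L : FacetLabel 3) :
    (edgesOf L).ncard = if L.1 ∈ pentagons then 5 else 4 := by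
  have h := ncard_infinite_Icc (β := Fin 3 → ℝ) halfPoint {L' : FacetLabel 3 | L' ≠ L}
    (fun L' => L.lower ⊔ L'.lower) (fun L' => L.upper ⊓ L'.upper)
  simp only [Finset.mem_filter_univ] at h
  simp only [edgesOf, FacetLabel.facetOf_inter, h]
  clear h
  revert L
  decide +kernel

theorem ncard_facets_edgesOf_eq_five : {L : FacetLabel 3 | (edgesOf L).ncard = 5}.ncard = 4 := by
  simp only [ncard_edgesOf]
  rw [ncard_eq_toFinset_card', toFinset_ofPred]
  decide +kernel

theorem ncard_facets_edgesOf_eq_four : {L : FacetLabel 3 | (edgesOf L).ncard = 4}.ncard = 4 := by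
  simp only [ncard_edgesOf]
  rw [ncard_eq_toFinset_card', toFinset_ofPred]
  decide +kernel

/-- **Statement 18**: the freehedron `F_n` (`n ≥ 2`) has exactly `3n − 1` pairwise
distinct nonempty codimension-one faces `d⁰₁,…,d⁰ₙ, d¹₂,…,d¹ₙ, d²₁,…,d²ₙ`, which cover
the boundary of the underlying cube; `F₂` is a pentagon (5 facets and 5 vertices); and
`F₃` has eight 2-faces — four pentagons and four quadrilaterals — eighteen edges and
twelve vertices. -/
theorem freehedron_face_counts (n : ℕ) (hn : 2 ≤ n) :
    -- the `3n − 1` labelled facets are pairwise distinct and nonempty …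
    Function.Injective (facetOf n) ∧
    (∀ L : FacetLabel n, (facetOf n L).Nonempty) ∧
    Nat.card (FacetLabel n) = 3 * n - 1 ∧
    -- … and cover the topological boundary of the cube, so they are exactly the
    -- codimension-one faces of `F_n`
    (⋃ L : FacetLabel n, facetOf n L) = frontier (cube n) ∧
    -- `F₂` is a pentagon: 5 facets and 5 vertices
    Nat.card (FacetLabel 2) = 5 ∧
    {v : Fin 2 → ℝ | ∃ L L' : FacetLabel 2,
      L ≠ L' ∧ v ∈ facetOf 2 L ∩ facetOf 2 L'}.ncard = 5 ∧
    -- `F₃` has eight 2-faces, twelve vertices, eighteen edges …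
    Nat.card (FacetLabel 3) = 8 ∧
    {v : Fin 3 → ℝ | ∃ L L' L'' : FacetLabel 3, L ≠ L' ∧ L ≠ L'' ∧ L' ≠ L'' ∧
      v ∈ facetOf 3 L ∩ facetOf 3 L' ∩ facetOf 3 L''}.ncard = 12 ∧
    {E : Set (Fin 3 → ℝ) | ∃ L L' : FacetLabel 3,
      L ≠ L' ∧ E = facetOf 3 L ∩ facetOf 3 L' ∧ E.Infinite}.ncard = 18 ∧
    -- … of which four are pentagons and four are quadrilaterals
    {L : FacetLabel 3 | (edgesOf L).ncard = 5}.ncard = 4 ∧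
    {L : FacetLabel 3 | (edgesOf L).ncard = 4}.ncard = 4 := by
  exact ⟨FacetLabel.facetOf_injective n, FacetLabel.facetOf_nonempty, FacetLabel.natCard n,
    iUnion_facetOf n, FacetLabel.natCard 2, ncard_vertices_two, FacetLabel.natCard 3,
    ncard_vertices_three, ncard_edges_three, ncard_facets_edgesOf_eq_five,
    ncard_facets_edgesOf_eq_four⟩
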